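/- arXiv:1603.07113 — 2 statements merged into one kernel-verified Lean document; each statement's English description precedes it below -/
import Mathlib

section
/- Let n ≥ 3 be an integer and λ a real number with (6n − 2)/(n² + n) ≤ λ < (10n − 2)/(n+1)². Then for all (u,v) ∈ [−1,1] × [−1,1], F_{n,λ}(u,v) ≤ 4λn² − 12n + 4, and equality holds if and only if (u,v) = (1,−1) or (u,v) = (−1,1). -/
/-- The function `F_{n,λ}(u,v)` from Lemma 4 of Li–Ponnusamy. -/
noncomputable def Ff (n : ℕ) (lam u v : ℝ) : ℝ :=
  (((n : ℝ) + 1) ^ 2 * lam - 8 * n) * u ^ 2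
    - 2 * ((n : ℝ) - 1) * (((n : ℝ) + 1) * lam - 2) * u * v
    + 4 * ((n : ℝ) - 1) * Real.sqrt (1 - u ^ 2) * Real.sqrt (1 - v ^ 2)
    + ((n : ℝ) - 1) ^ 2 * lam * v ^ 2

/-!
Completing squares in `u + v` and `√(1 - u²) - √(1 - v²)` writes `4λn² - 12n + 4 - F(u, v)` as a
combination of `(u + v)²`, `(√(1 - u²) - √(1 - v²))²`, `1 - u²` and `1 - v²`. The lower bound on `λ`
says exactly that the coefficient of `1 - u²` is nonnegative; for `n > 1` it also makes the
coefficients of `(u + v)²` and `1 - v²` positive, so equality forces `u + v = 0` and `v² = 1`.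
-/

theorem bound_sub_Ff_eq (n : ℕ) (lam : ℝ) {u v : ℝ} (hu : u ^ 2 ≤ 1) (hv : v ^ 2 ≤ 1) :
    4 * lam * (n : ℝ) ^ 2 - 12 * n + 4 - Ff n lam u v =
      ((n : ℝ) - 1) * ((n + 1) * lam - 2) * (u + v) ^ 2
        + 2 * ((n : ℝ) - 1) * (√(1 - u ^ 2) - √(1 - v ^ 2)) ^ 2
        + 2 * (lam * ((n : ℝ) ^ 2 + n) - (6 * n - 2)) * (1 - u ^ 2)
        + 2 * ((n : ℝ) - 1) * (n * lam - 2) * (1 - v ^ 2) := by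
  unfold Ff
  linear_combination
    -(2 * ((n : ℝ) - 1)) * (Real.sq_sqrt (sub_nonneg.2 hu) + Real.sq_sqrt (sub_nonneg.2 hv))

theorem le_bound_sub_Ff {n : ℕ} (hn : 1 ≤ n) {lam : ℝ}
    (hlam : (6 * (n : ℝ) - 2) / ((n : ℝ) ^ 2 + n) ≤ lam)
    {u v : ℝ} (hu : u ^ 2 ≤ 1) (hv : v ^ 2 ≤ 1) :
    ((n : ℝ) - 1) * ((n + 1) * lam - 2) * (u + v) ^ 2
        + 2 * ((n : ℝ) - 1) * (n * lam - 2) * (1 - v ^ 2) ≤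
      4 * lam * (n : ℝ) ^ 2 - 12 * n + 4 - Ff n lam u v := by
  have hn' : (1 : ℝ) ≤ n := by exact_mod_cast hn
  have hcoeff : 0 ≤ lam * ((n : ℝ) ^ 2 + n) - (6 * n - 2) :=
    sub_nonneg.2 ((div_le_iff₀ (by positivity)).1 hlam)
  have hsqrt : 0 ≤ 2 * ((n : ℝ) - 1) * (√(1 - u ^ 2) - √(1 - v ^ 2)) ^ 2 :=
    mul_nonneg (by linarith) (sq_nonneg _)
  have hone_sub : 0 ≤ 2 * (lam * ((n : ℝ) ^ 2 + n) - (6 * n - 2)) * (1 - u ^ 2) :=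
    mul_nonneg (by linarith) (sub_nonneg.2 hu)
  rw [bound_sub_Ff_eq n lam hu hv]
  linarith

theorem two_lt_mul_of_div_le {x lam : ℝ} (hx : 1 < x)
    (hlam : (6 * x - 2) / (x ^ 2 + x) ≤ lam) : 2 < x * lam :=
  calc
    2 < (6 * x - 2) / (x + 1) := by rw [lt_div_iff₀ (by linarith)]; linarith
    _ = x * ((6 * x - 2) / (x ^ 2 + x)) := by field_simp
    _ ≤ x * lam := by gcongr

theorem Ff_one_neg_one (n : ℕ) (lam : ℝ) :
    Ff n lam 1 (-1) = 4 * lam * (n : ℝ) ^ 2 - 12 * n + 4 := by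
  simp only [Ff, one_pow, sub_self, Real.sqrt_zero]
  ring

theorem Ff_neg_neg (n : ℕ) (lam u v : ℝ) : Ff n lam (-u) (-v) = Ff n lam u v := by
  simp only [Ff, neg_sq]
  ring

theorem F_bound_middle_lambda_general {n : ℕ} (hn : 1 < n) {lam : ℝ}
    (hlam : (6 * (n : ℝ) - 2) / ((n : ℝ) ^ 2 + n) ≤ lam)
    {u v : ℝ} (hu : u ∈ Set.Icc (-1 : ℝ) 1) (hv : v ∈ Set.Icc (-1 : ℝ) 1) :
    Ff n lam u v ≤ 4 * lam * (n : ℝ) ^ 2 - 12 * n + 4 ∧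
      (Ff n lam u v = 4 * lam * (n : ℝ) ^ 2 - 12 * n + 4 ↔
        (u = 1 ∧ v = -1) ∨ (u = -1 ∧ v = 1)) := by
  have hn' : (1 : ℝ) < n := by exact_mod_cast hn
  have hnlam : 2 < n * lam := two_lt_mul_of_div_le hn' hlam
  have hlam_pos : 0 < lam := pos_of_mul_pos_right (two_pos.trans hnlam) n.cast_nonneg
  have hu2 : u ^ 2 ≤ 1 := (sq_le_one_iff_abs_le_one u).2 (abs_le.2 hu)
  have hv2 : v ^ 2 ≤ 1 := (sq_le_one_iff_abs_le_one v).2 (abs_le.2 hv)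
  have hadd_coeff : 0 < ((n : ℝ) - 1) * ((n + 1) * lam - 2) :=
    mul_pos (by linarith) (by linarith)
  have hone_sub_coeff : 0 < 2 * ((n : ℝ) - 1) * (n * lam - 2) :=
    mul_pos (by linarith) (by linarith)
  have hadd := mul_nonneg hadd_coeff.le (sq_nonneg (u + v))
  have hone_sub := mul_nonneg hone_sub_coeff.le (sub_nonneg.2 hv2)
  have hgap := le_bound_sub_Ff hn.le hlam hu2 hv2
  refine ⟨by linarith, fun heq ↦ ?_, ?_⟩
  · have huv : u = -v := eq_neg_of_add_eq_zero_left <| sq_eq_zero_iff.1 <|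
      (mul_eq_zero_iff_left hadd_coeff.ne').1 (by linarith)
    have hv_sq : 1 - v ^ 2 = 0 := (mul_eq_zero_iff_left hone_sub_coeff.ne').1 (by linarith)
    rcases sq_eq_one_iff.1 (sub_eq_zero.1 hv_sq).symm with rfl | rfl
    · exact .inr ⟨huv, rfl⟩
    · exact .inl ⟨by simpa using huv, rfl⟩
  · rintro (⟨rfl, rfl⟩ | ⟨rfl, rfl⟩)
    · exact Ff_one_neg_one n lam
    · simpa only [neg_neg, Ff_one_neg_one] using Ff_neg_neg n lam 1 (-1)

theorem F_bound_middle_lambda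
    (n : ℕ) (hn : 3 ≤ n) (lam : ℝ)
    (hlam1 : (6 * (n : ℝ) - 2) / ((n : ℝ) ^ 2 + n) ≤ lam)
    (hlam2 : lam < (10 * (n : ℝ) - 2) / ((n : ℝ) + 1) ^ 2) :
    ∀ u v : ℝ, u ∈ Set.Icc (-1 : ℝ) 1 → v ∈ Set.Icc (-1 : ℝ) 1 →
      Ff n lam u v ≤ 4 * lam * (n : ℝ) ^ 2 - 12 * n + 4 ∧
      (Ff n lam u v = 4 * lam * (n : ℝ) ^ 2 - 12 * n + 4 ↔
        (u = 1 ∧ v = -1) ∨ (u = -1 ∧ v = 1)) :=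
  fun _ _ ↦ F_bound_middle_lambda_general (by lia) hlam1
end

section
/- Let n ≥ 3 be an integer and λ a real number with 2n/(n² − n + 1) < λ < (3n + √(5n² − 4n))/(n² + n). Then for all (u,v) ∈ [−1,1] × [−1,1], F_{n,λ}(u,v) ≤ (4λ(n−1)[λ(n² + 1) − 4n] + 16n(2 − λ)√(nλ(2 − λ))) / (λ[8n − λ(n+1)²]). -/
/-!
Put `s = √(1 - u²)` and `t = √(1 - v²)`. With Lagrange multipliers `a` and `b` for the constraints
`u² + s² = 1` and `v² + t² = 1`, the difference `a + b - F` splits into a quadratic form in `(s, t)`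
and one in `(u, v)`. The multipliers are chosen so that both forms are degenerate, hence positive
semidefinite: the first condition reads `a b = 4 (n - 1)²`, and the second then becomes the
quadratic equation `λ a² + 4 λ (n - 1) a = 4 (8 n - λ (n + 1)²)`, whose positive root is `a`.
-/

/-- The function `F_{ν,λ}(u,v)`, with the integer `n` of `Ff` replaced by a real parameter `ν`. -/
noncomputable def realFf (ν lam u v : ℝ) : ℝ :=
  ((ν + 1) ^ 2 * lam - 8 * ν) * u ^ 2
    - 2 * (ν - 1) * ((ν + 1) * lam - 2) * u * v
    + 4 * (ν - 1) * √(1 - u ^ 2) * √(1 - v ^ 2)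
    + (ν - 1) ^ 2 * lam * v ^ 2

theorem binary_quadratic_form_nonneg
    {R : Type*} [CommRing R] [LinearOrder R] [IsStrictOrderedRing R]
    {p q r : R} (hp : 0 < p) (hdisc : q ^ 2 ≤ p * r) (x y : R) :
    0 ≤ p * x ^ 2 + 2 * q * x * y + r * y ^ 2 := by
  have complete_square : p * (p * x ^ 2 + 2 * q * x * y + r * y ^ 2) =
      (p * x + q * y) ^ 2 + (p * r - q ^ 2) * y ^ 2 := by ring
  refine nonneg_of_mul_nonneg_right (complete_square ▸ ?_) hp
  exact add_nonneg (sq_nonneg _) (mul_nonneg (sub_nonneg.2 hdisc) (sq_nonneg y))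

theorem quadratic_add_sqrt_mul_sqrt_le_add {p q r k a b u v : ℝ}
    (ha : 0 < a) (hpa : p < a) (hk : k ^ 2 ≤ a * b) (hq : q ^ 2 ≤ (a - p) * (b - r))
    (hu : u ∈ Set.Icc (-1) 1) (hv : v ∈ Set.Icc (-1) 1) :
    p * u ^ 2 + 2 * q * u * v + 2 * k * √(1 - u ^ 2) * √(1 - v ^ 2) + r * v ^ 2 ≤ a + b := by
  have hs : √(1 - u ^ 2) ^ 2 = 1 - u ^ 2 :=
    Real.sq_sqrt (sub_nonneg.2 (sq_le_one_iff_abs_le_one u |>.2 (abs_le.2 hu)))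
  have ht : √(1 - v ^ 2) ^ 2 = 1 - v ^ 2 :=
    Real.sq_sqrt (sub_nonneg.2 (sq_le_one_iff_abs_le_one v |>.2 (abs_le.2 hv)))
  have hst := binary_quadratic_form_nonneg (q := -k) ha (by rwa [neg_sq])
    √(1 - u ^ 2) √(1 - v ^ 2)
  have huv := binary_quadratic_form_nonneg (q := -q) (sub_pos.2 hpa) (by rwa [neg_sq]) u v
  rw [hs, ht] at hst
  linarith

/-- The Lagrange multiplier of the constraint `u² + s² = 1`: the larger root `a` of
`λ a² + 4 λ (ν - 1) a = 4 (8 ν - λ (ν + 1)²)`. -/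
noncomputable def uMultiplier (ν lam : ℝ) : ℝ :=
  4 * √(ν * lam * (2 - lam)) / lam - 2 * (ν - 1)

/-- The Lagrange multiplier `b` of the constraint `v² + t² = 1`, determined by
`a b = 4 (ν - 1)²` where `a` is `uMultiplier ν lam`. -/
noncomputable def vMultiplier (ν lam : ℝ) : ℝ :=
  4 * (ν - 1) ^ 2 / uMultiplier ν lam

section Multipliers

variable {ν lam : ℝ}

theorem uMultiplier_quadratic (hlam : lam ≠ 0) (hrad : 0 ≤ ν * lam * (2 - lam)) :
    lam * uMultiplier ν lam ^ 2 + 4 * lam * (ν - 1) * uMultiplier ν lam =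
      4 * (8 * ν - lam * (ν + 1) ^ 2) := by
  have hS := Real.sq_sqrt hrad
  unfold uMultiplier
  generalize √(ν * lam * (2 - lam)) = S at hS ⊢
  field_simp
  linear_combination 16 * hS

theorem uMultiplier_pos (hlam : 0 < lam) (hν : lam * (ν + 1) ^ 2 < 8 * ν) :
    0 < uMultiplier ν lam := by
  have hsqrt : lam * (ν - 1) / 2 < √(ν * lam * (2 - lam)) := by
    apply Real.lt_sqrt_of_sq_lt
    linarith [mul_pos hlam (sub_pos.2 hν)]
  rw [uMultiplier, sub_pos, lt_div_iff₀ hlam]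
  linarith

theorem mul_mul_two_sub_nonneg (hlam : 0 < lam) (hν : lam * (ν + 1) ^ 2 < 8 * ν) :
    0 ≤ ν * lam * (2 - lam) := by
  have hdecomp : 4 * (ν * lam * (2 - lam)) =
      lam * (8 * ν - lam * (ν + 1) ^ 2) + (lam * (ν - 1)) ^ 2 := by ring
  linarith [hdecomp, mul_pos hlam (sub_pos.2 hν), sq_nonneg (lam * (ν - 1))]

theorem uMultiplier_mul_vMultiplier (ha : uMultiplier ν lam ≠ 0) :
    uMultiplier ν lam * vMultiplier ν lam = 4 * (ν - 1) ^ 2 :=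
  mul_div_cancel₀ _ ha

theorem uMultiplier_sub_mul_vMultiplier_sub (hlam : 0 < lam) (hν : lam * (ν + 1) ^ 2 < 8 * ν) :
    (uMultiplier ν lam - ((ν + 1) ^ 2 * lam - 8 * ν)) * (vMultiplier ν lam - (ν - 1) ^ 2 * lam) =
      ((ν - 1) * ((ν + 1) * lam - 2)) ^ 2 := by
  have ha := uMultiplier_pos hlam hν
  have hquad := uMultiplier_quadratic hlam.ne' (mul_mul_two_sub_nonneg hlam hν)
  unfold vMultiplier
  field_simp
  linear_combination (-(ν - 1) ^ 2) * hquad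

theorem uMultiplier_add_vMultiplier (hlam : 0 < lam) (hν : lam * (ν + 1) ^ 2 < 8 * ν) :
    uMultiplier ν lam + vMultiplier ν lam =
      (4 * lam * (ν - 1) * (lam * (ν ^ 2 + 1) - 4 * ν)
          + 16 * ν * (2 - lam) * √(ν * lam * (2 - lam)))
        / (lam * (8 * ν - lam * (ν + 1) ^ 2)) := by
  have ha := uMultiplier_pos hlam hν
  have hquad := uMultiplier_quadratic hlam.ne' (mul_mul_two_sub_nonneg hlam hν)
  have hS : lam * uMultiplier ν lam = 4 * √(ν * lam * (2 - lam)) - 2 * lam * (ν - 1) := by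
    unfold uMultiplier
    field_simp
  have hb : (8 * ν - lam * (ν + 1) ^ 2) * vMultiplier ν lam =
      lam * (ν - 1) ^ 2 * (uMultiplier ν lam + 4 * (ν - 1)) := by
    unfold vMultiplier
    field_simp
    linear_combination (-(ν - 1) ^ 2) * hquad
  rw [eq_div_iff (mul_pos hlam (sub_pos.2 hν)).ne']
  linear_combination 4 * ν * (2 - lam) * hS + lam * hb

end Multipliers

theorem F_max_middle_lambda_general {ν lam u v : ℝ}
    (hlam : 0 < lam) (hν : lam * (ν + 1) ^ 2 < 8 * ν)
    (hu : u ∈ Set.Icc (-1) 1) (hv : v ∈ Set.Icc (-1) 1) :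
    realFf ν lam u v ≤
      (4 * lam * (ν - 1) * (lam * (ν ^ 2 + 1) - 4 * ν)
          + 16 * ν * (2 - lam) * √(ν * lam * (2 - lam)))
        / (lam * (8 * ν - lam * (ν + 1) ^ 2)) := by
  have ha := uMultiplier_pos hlam hν
  have hst : (2 * (ν - 1)) ^ 2 ≤ uMultiplier ν lam * vMultiplier ν lam := by
    rw [uMultiplier_mul_vMultiplier ha.ne']
    linarith
  have huv := (uMultiplier_sub_mul_vMultiplier_sub hlam hν).ge
  rw [← neg_sq] at huv
  rw [← uMultiplier_add_vMultiplier hlam hν]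
  calc
    realFf ν lam u v = ((ν + 1) ^ 2 * lam - 8 * ν) * u ^ 2
        + 2 * (-((ν - 1) * ((ν + 1) * lam - 2))) * u * v
        + 2 * (2 * (ν - 1)) * √(1 - u ^ 2) * √(1 - v ^ 2)
        + (ν - 1) ^ 2 * lam * v ^ 2 := by
      unfold realFf
      ring
    _ ≤ uMultiplier ν lam + vMultiplier ν lam :=
      quadratic_add_sqrt_mul_sqrt_le_add ha (by linarith) hst huv hu hv

theorem three_mul_add_sqrt_div_le {x : ℝ} (hx : 1 ≤ x) :
    (3 * x + √(5 * x ^ 2 - 4 * x)) / (x ^ 2 + x) ≤ 8 * x / (x + 1) ^ 2 := by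
  have hsqrt : √(5 * x ^ 2 - 4 * x) ≤ x * (5 * x - 3) / (x + 1) := by
    have hx' : 0 ≤ 5 * x - 3 := by linarith
    refine Real.sqrt_le_iff.2 ⟨by positivity, ?_⟩
    have hdiff : (x * (5 * x - 3)) ^ 2 - (5 * x ^ 2 - 4 * x) * (x + 1) ^ 2 =
        4 * x * (5 * x + 1) * (x - 1) ^ 2 := by ring
    rw [div_pow, le_div_iff₀ (by positivity), ← sub_nonneg, hdiff]
    positivity
  calc
    (3 * x + √(5 * x ^ 2 - 4 * x)) / (x ^ 2 + x)
        ≤ (3 * x + x * (5 * x - 3) / (x + 1)) / (x ^ 2 + x) := by gcongr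
    _ = 8 * x / (x + 1) ^ 2 := by
      field_simp
      ring

theorem two_mul_div_sq_sub_add_one_nonneg {x : ℝ} (hx : 0 ≤ x) : 0 ≤ 2 * x / (x ^ 2 - x + 1) :=
  div_nonneg (by positivity) (by linarith [sq_nonneg (x - 1)])

theorem F_max_middle_lambda
    (n : ℕ) (hn : 3 ≤ n) (lam : ℝ)
    (hlam1 : 2 * (n : ℝ) / ((n : ℝ) ^ 2 - n + 1) < lam)
    (hlam2 : lam < (3 * (n : ℝ) + Real.sqrt (5 * (n : ℝ) ^ 2 - 4 * n)) / ((n : ℝ) ^ 2 + n)) :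
    ∀ u v : ℝ, u ∈ Set.Icc (-1 : ℝ) 1 → v ∈ Set.Icc (-1 : ℝ) 1 →
      Ff n lam u v ≤
        (4 * lam * ((n : ℝ) - 1) * (lam * ((n : ℝ) ^ 2 + 1) - 4 * n)
            + 16 * (n : ℝ) * (2 - lam) * Real.sqrt ((n : ℝ) * lam * (2 - lam)))
          / (lam * (8 * (n : ℝ) - lam * ((n : ℝ) + 1) ^ 2)) := by
  intro u v
  have hn1 : (1 : ℝ) ≤ n := by exact_mod_cast (by lia : 1 ≤ n)
  exact F_max_middle_lambda_general
    ((two_mul_div_sq_sub_add_one_nonneg n.cast_nonneg).trans_lt hlam1)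
    ((lt_div_iff₀ (by positivity)).1 (hlam2.trans_le (three_mul_add_sqrt_div_le hn1)))
end
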